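/- arXiv:1710.05136 — 2 statements merged into one kernel-verified Lean document; each statement's English description precedes it below -/
import Mathlib

section
/- Let S be a Polish space with its Borel σ-field and S' a separable metric space with its Borel σ-field. Let (μₙ)ₙ₌₀,₁,₂,… be probability measures on S such that μₙ converges weakly to μ₀ as n → ∞. Let h : S → S' be a Borel measurable map for which there exists a Borel set S̃ ⊆ S with μₙ(S̃) = 1 for every n = 0, 1, 2, … and such that the restriction of h to S̃ is continuous. Then the pushforward measures μₙ ∘ h⁻¹ converge weakly to μ₀ ∘ h⁻¹ as n → ∞. -/
open MeasureTheory Filter Topology BoundedContinuousFunction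

/-!
Weak convergence is tested on open sets `G`. Continuity of `h` on `s` produces one open
set `U` that agrees with `h ⁻¹' G` on `s`, so a measure concentrated on `s` has pushforward mass of
`G` equal to its mass of `U`. As `U` does not depend on the measure, the portmanteau inequality for
`U` is the portmanteau inequality for `G`.
-/

section

variable {S S' ι : Type*} [TopologicalSpace S] [MeasurableSpace S] [OpensMeasurableSpace S]
  [TopologicalSpace S'] [MeasurableSpace S'] [BorelSpace S'] {h : S → S'} {s : Set S}

lemma aemeasurable_of_continuousOn_of_ae_mem {μ : Measure S} (hcont : ContinuousOn h s)
    (hs : ∀ᵐ x ∂μ, x ∈ s) : AEMeasurable h μ := by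
  obtain ⟨t, ht_ae, ht_meas, hts⟩ := IsMeasurablyGenerated.exists_measurable_subset hs
  rw [← Measure.restrict_eq_self_of_ae_mem ht_ae]
  exact (hcont.mono hts).aemeasurable ht_meas

lemma exists_isOpen_forall_map_apply_eq_of_continuousOn (hcont : ContinuousOn h s)
    {G : Set S'} (hG : IsOpen G) :
    ∃ U, IsOpen U ∧ ∀ μ : Measure S, (∀ᵐ x ∂μ, x ∈ s) → μ.map h G = μ U := by
  obtain ⟨U, hU, hGU⟩ := continuousOn_iff'.1 hcont G hG
  refine ⟨U, hU, fun μ hs ↦ ?_⟩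
  have hs_univ : s =ᵐ[μ] Set.univ := eventuallyEq_univ.2 hs
  calc
    μ.map h G = μ (h ⁻¹' G) :=
      Measure.map_apply_of_aemeasurable (aemeasurable_of_continuousOn_of_ae_mem hcont hs)
        hG.measurableSet
    _ = μ (h ⁻¹' G ∩ s) := (measure_congr (inter_ae_eq_left_of_ae_eq_univ hs_univ)).symm
    _ = μ (U ∩ s) := by rw [hGU]
    _ = μ U := measure_congr (inter_ae_eq_left_of_ae_eq_univ hs_univ)

lemma le_liminf_map_apply_of_tendsto_of_continuousOn [HasOuterApproxClosed S] {L : Filter ι}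
    {μs : ι → ProbabilityMeasure S} {μ : ProbabilityMeasure S} (hlim : Tendsto μs L (𝓝 μ))
    (hcont : ContinuousOn h s) (hs : ∀ i, ∀ᵐ x ∂(μs i : Measure S), x ∈ s)
    (hs_lim : ∀ᵐ x ∂(μ : Measure S), x ∈ s) {G : Set S'} (hG : IsOpen G) :
    (μ : Measure S).map h G ≤ L.liminf fun i ↦ (μs i : Measure S).map h G := by
  obtain ⟨U, hU, hmap⟩ := exists_isOpen_forall_map_apply_eq_of_continuousOn hcont hG
  simp only [hmap _ hs_lim, hmap _ (hs _)]
  exact ProbabilityMeasure.le_liminf_measure_open_of_tendsto hlim hU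

theorem mapping_theorem_general [HasOuterApproxClosed S] {L : Filter ι} [L.IsCountablyGenerated]
    {μs : ι → Measure S} {μ : Measure S} [∀ i, IsProbabilityMeasure (μs i)]
    [IsProbabilityMeasure μ]
    (hweak : ∀ g : S →ᵇ ℝ, Tendsto (fun i ↦ ∫ x, g x ∂(μs i)) L (𝓝 (∫ x, g x ∂μ)))
    (hcont : ContinuousOn h s) (hs : ∀ i, ∀ᵐ x ∂(μs i), x ∈ s) (hs_lim : ∀ᵐ x ∂μ, x ∈ s)
    (g : S' →ᵇ ℝ) :
    Tendsto (fun i ↦ ∫ y, g y ∂((μs i).map h)) L (𝓝 (∫ y, g y ∂(μ.map h))) := by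
  let Ps : ι → ProbabilityMeasure S := fun i ↦ ⟨μs i, inferInstance⟩
  let P : ProbabilityMeasure S := ⟨μ, inferInstance⟩
  have hP : Tendsto Ps L (𝓝 P) :=
    ProbabilityMeasure.tendsto_iff_forall_integral_tendsto.2 hweak
  have hmap : Tendsto
      (fun i ↦ (Ps i).map (aemeasurable_of_continuousOn_of_ae_mem hcont (hs i))) L
      (𝓝 (P.map (aemeasurable_of_continuousOn_of_ae_mem hcont hs_lim))) :=
    tendsto_of_forall_isOpen_le_liminf' fun _ hG ↦
      le_liminf_map_apply_of_tendsto_of_continuousOn hP hcont hs hs_lim hG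
  exact ProbabilityMeasure.tendsto_iff_forall_integral_tendsto.1 hmap g

end

/-- **Mapping theorem (variant of the continuous mapping theorem).**
Let `S` be a Polish space and `S'` a separable metric space, both with their
Borel σ-fields.  Let `μₙ` (`n = 0, 1, 2, …`) be probability measures on `S`
with `μₙ → μ₀` weakly.  Let `h : S → S'` be measurable and suppose there is a
Borel set `S̃` with `μₙ(S̃) = 1` for all `n` such that the restriction of `h`
to `S̃` is continuous.  Then `μₙ ∘ h⁻¹ → μ₀ ∘ h⁻¹` weakly. -/
theorem mapping_theorem
    {S : Type*} [TopologicalSpace S] [PolishSpace S]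
    [MeasurableSpace S] [BorelSpace S]
    {S' : Type*} [MetricSpace S'] [TopologicalSpace.SeparableSpace S']
    [MeasurableSpace S'] [BorelSpace S']
    (μ : ℕ → Measure S) (hprob : ∀ n, IsProbabilityMeasure (μ n))
    (hweak : ∀ g : S →ᵇ ℝ,
      Tendsto (fun n => ∫ x, g x ∂(μ n)) atTop (𝓝 (∫ x, g x ∂(μ 0))))
    (h : S → S') (hmeas : Measurable h)
    (Stilde : Set S) (hSmeas : MeasurableSet Stilde)
    (hfull : ∀ n, μ n Stilde = 1)
    (hcont : Continuous (Stilde.restrict h)) :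
    ∀ g : S' →ᵇ ℝ,
      Tendsto (fun n => ∫ y, g y ∂((μ n).map h)) atTop
        (𝓝 (∫ y, g y ∂((μ 0).map h))) := by
  have hs (n : ℕ) : ∀ᵐ x ∂(μ n), x ∈ Stilde := (mem_ae_iff_prob_eq_one hSmeas).2 (hfull n)
  exact mapping_theorem_general hweak (continuousOn_iff_continuous_domRestrict.2 hcont) hs (hs 0)
end

section
/- Assume X is nonempty, and for y, y' ∈ ℝᵐ set S(y, y') := sup_{x ∈ X} ( ‖y − F(x)‖ ∨ ‖y' − F(x)‖ ), which is finite since F is bounded. Then the Hellinger distance between the posteriors μʸ and μʸ', given by d_Hell(μʸ, μʸ') = sqrt( (1/2) ∫_X ( sqrt(Ψ(x; y)/Z(y)) − sqrt(Ψ(x; y')/Z(y')) )² dμ₀(x) ), satisfies the Lipschitz stability estimate d_Hell(μʸ, μʸ') ≤ exp( 3 S(y, y')² / (4σ²) ) · ( S(y, y') / σ ) · ( ‖y − y'‖ / σ ). -/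
open MeasureTheory Real

/-!
Write the posterior density as `exp (-Φ) / ∫ exp (-Φ)` with the misfit `Φ = ‖y - F‖² / (2σ²)`; the
Gaussian prefactor cancels. The root densities `f, g` are points of `L²(μ₀)`, and the Hellinger
distance compares their projections to the unit sphere, which satisfy
`‖f‖ ‖g‖ ‖f/‖f‖ - g/‖g‖‖² = ‖f - g‖² - (‖f‖ - ‖g‖)²`.
Hence no separate estimate of `Z(y) - Z(y')` is needed: it suffices that
`f = exp (-‖y - F‖² / (4σ²))` is bounded below by `exp (-S² / (4σ²))` and is Lipschitz in `y` with
constant `S / (2σ²)`.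
-/

section Elementary

lemma abs_exp_sub_exp_le (u v : ℝ) : |exp u - exp v| ≤ exp (max u v) * |u - v| := by
  wlog hvu : v ≤ u generalizing u v
  · rw [abs_sub_comm, abs_sub_comm u, max_comm]
    exact this v u (le_of_not_ge hvu)
  rw [max_eq_left hvu, abs_of_nonneg (sub_nonneg.2 (exp_le_exp.2 hvu)),
    abs_of_nonneg (sub_nonneg.2 hvu)]
  calc exp u - exp v = exp u * (1 - exp (v - u)) := by
        rw [mul_sub, mul_one, ← exp_add, add_sub_cancel]
    _ ≤ exp u * (u - v) :=
        mul_le_mul_of_nonneg_left (by linarith [add_one_le_exp (v - u)]) (exp_pos u).le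

lemma abs_sq_norm_sub_sq_norm_le {E : Type*} [SeminormedAddCommGroup E] (u v : E) :
    |‖u‖ ^ 2 - ‖v‖ ^ 2| ≤ (‖u‖ + ‖v‖) * ‖u - v‖ := by
  rw [sq_sub_sq, abs_mul, abs_of_nonneg (by positivity)]
  gcongr
  exact abs_norm_sub_norm_le u v

lemma bddAbove_range_max_norm_sub {ι E : Type*} [SeminormedAddGroup E] {F : ι → E} {C : ℝ}
    (hF : ∀ i, ‖F i‖ ≤ C) (y y' : E) :
    BddAbove (Set.range fun i => max ‖y - F i‖ ‖y' - F i‖) := by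
  refine ⟨max (‖y‖ + C) (‖y'‖ + C), ?_⟩
  rintro _ ⟨i, rfl⟩
  have norm_sub_le_add (z : E) : ‖z - F i‖ ≤ ‖z‖ + C :=
    (norm_sub_le z (F i)).trans (add_le_add_right (hF i) ‖z‖)
  exact max_le_max (norm_sub_le_add y) (norm_sub_le_add y')

end Elementary

section Hellinger

variable {X : Type*} [MeasurableSpace X] {μ : Measure X} {p q : X → ℝ}

lemma mul_integral_sq_div_sub_div_le {f g : X → ℝ} (hf : MemLp f 2 μ) (hg : MemLp g 2 μ) :
    √(∫ x, f x ^ 2 ∂μ) * √(∫ x, g x ^ 2 ∂μ) *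
        ∫ x, (f x / √(∫ x, f x ^ 2 ∂μ) - g x / √(∫ x, g x ^ 2 ∂μ)) ^ 2 ∂μ
      ≤ ∫ x, (f x - g x) ^ 2 ∂μ := by
  have sq_a : √(∫ x, f x ^ 2 ∂μ) ^ 2 = ∫ x, f x ^ 2 ∂μ := sq_sqrt (by positivity)
  have sq_b : √(∫ x, g x ^ 2 ∂μ) ^ 2 = ∫ x, g x ^ 2 ∂μ := sq_sqrt (by positivity)
  set a := √(∫ x, f x ^ 2 ∂μ)
  set b := √(∫ x, g x ^ 2 ∂μ)
  have rhs_nonneg : 0 ≤ ∫ x, (f x - g x) ^ 2 ∂μ := by positivity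
  rcases eq_or_ne a 0 with ha | ha
  · simpa only [ha, zero_mul] using rhs_nonneg
  rcases eq_or_ne b 0 with hb | hb
  · simpa only [hb, mul_zero, zero_mul] using rhs_nonneg
  have pointwise (x : X) : a * b * (f x / a - g x / b) ^ 2 =
      (f x - g x) ^ 2 + ((b / a - 1) * f x ^ 2 + (a / b - 1) * g x ^ 2) := by
    field_simp
    ring
  have int_f : Integrable (fun x => (b / a - 1) * f x ^ 2) μ := hf.integrable_sq.const_mul _
  have int_g : Integrable (fun x => (a / b - 1) * g x ^ 2) μ := hg.integrable_sq.const_mul _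
  have int_fg : Integrable (fun x => (b / a - 1) * f x ^ 2 + (a / b - 1) * g x ^ 2) μ :=
    int_f.add int_g
  have int_sub : Integrable (fun x => (f x - g x) ^ 2) μ := (hf.sub hg).integrable_sq
  calc a * b * ∫ x, (f x / a - g x / b) ^ 2 ∂μ
      = ∫ x, (f x - g x) ^ 2 ∂μ + ((b / a - 1) * a ^ 2 + (a / b - 1) * b ^ 2) := by
        simp_rw [← integral_const_mul, pointwise]
        rw [integral_add int_sub int_fg, integral_add int_f int_g,
          integral_const_mul, integral_const_mul, ← sq_a, ← sq_b]
    _ = ∫ x, (f x - g x) ^ 2 ∂μ - (a - b) ^ 2 := by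
        field_simp
        ring
    _ ≤ ∫ x, (f x - g x) ^ 2 ∂μ := sub_le_self _ (sq_nonneg _)

/-- The Hellinger distance between the measures with densities `p` and `q` with respect to `μ`. It
is defined for unnormalized densities too; negative values of a density count as `0`. -/
noncomputable def hellingerDist (μ : Measure X) (p q : X → ℝ) : ℝ :=
  √(1 / 2 * ∫ x, (√(p x) - √(q x)) ^ 2 ∂μ)

/-- The density with respect to `μ` of the probability measure proportional to `p • μ`, i.e. of the
posterior when `μ` is the prior and `p` the likelihood. It is `0` when `∫ p ∂μ = 0`. -/
noncomputable def normalizedDensity (μ : Measure X) (p : X → ℝ) (x : X) : ℝ :=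
  p x / ∫ x, p x ∂μ

lemma normalizedDensity_const_mul {c : ℝ} (hc : c ≠ 0) (μ : Measure X) (p : X → ℝ) :
    normalizedDensity μ (fun x => c * p x) = normalizedDensity μ p := by
  ext x
  simp only [normalizedDensity, integral_const_mul, mul_div_mul_left _ _ hc]

lemma hellingerDist_nonneg (μ : Measure X) (p q : X → ℝ) : 0 ≤ hellingerDist μ p q :=
  sqrt_nonneg _

lemma hellingerDist_sq (μ : Measure X) (p q : X → ℝ) :
    hellingerDist μ p q ^ 2 = 1 / 2 * ∫ x, (√(p x) - √(q x)) ^ 2 ∂μ :=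
  sq_sqrt (by positivity)

lemma hellingerDist_le_of_abs_sqrt_sub_sqrt_le [IsProbabilityMeasure μ] {L : ℝ}
    (hL : ∀ᵐ x ∂μ, |√(p x) - √(q x)| ≤ L) : hellingerDist μ p q ≤ L / √2 := by
  obtain ⟨x, hx⟩ := hL.exists
  have hL0 : 0 ≤ L := (abs_nonneg _).trans hx
  have integral_le : ∫ x, (√(p x) - √(q x)) ^ 2 ∂μ ≤ L ^ 2 := by
    calc ∫ x, (√(p x) - √(q x)) ^ 2 ∂μ ≤ ∫ _, L ^ 2 ∂μ :=
          integral_mono_of_nonneg (.of_forall fun _ => sq_nonneg _) (integrable_const _)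
            (hL.mono fun _ hx => sq_le_sq.2 (hx.trans (le_abs_self L)))
      _ = L ^ 2 := by simp
  refine sqrt_le_iff.2 ⟨by positivity, ?_⟩
  rw [div_pow, sq_sqrt zero_le_two]
  linarith

lemma memLp_two_sqrt_of_integrable (hp : Integrable p μ) (hp0 : 0 ≤ᵐ[μ] p) :
    MemLp (fun x => √(p x)) 2 μ :=
  (memLp_two_iff_integrable_sq
    (continuous_sqrt.comp_aestronglyMeasurable hp.aestronglyMeasurable)).2
    (hp.congr (hp0.mono fun _ hx => (sq_sqrt hx).symm))

lemma mul_sq_hellingerDist_normalizedDensity_le (hp : Integrable p μ) (hq : Integrable q μ)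
    (hp0 : 0 ≤ᵐ[μ] p) (hq0 : 0 ≤ᵐ[μ] q) :
    √(∫ x, p x ∂μ) * √(∫ x, q x ∂μ) *
        hellingerDist μ (normalizedDensity μ p) (normalizedDensity μ q) ^ 2
      ≤ hellingerDist μ p q ^ 2 := by
  have integral_sq_sqrt {r : X → ℝ} (hr0 : 0 ≤ᵐ[μ] r) : ∫ x, √(r x) ^ 2 ∂μ = ∫ x, r x ∂μ :=
    integral_congr_ae (hr0.mono fun _ hx => sq_sqrt hx)
  have key := mul_integral_sq_div_sub_div_le (memLp_two_sqrt_of_integrable hp hp0)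
    (memLp_two_sqrt_of_integrable hq hq0)
  simp only [integral_sq_sqrt hp0, integral_sq_sqrt hq0] at key
  simp only [hellingerDist_sq, normalizedDensity, sqrt_div' _ (integral_nonneg_of_ae hp0),
    sqrt_div' _ (integral_nonneg_of_ae hq0)]
  linarith

lemma hellingerDist_normalizedDensity_le_div_sqrt [IsProbabilityMeasure μ] {ε : ℝ} (hε : 0 < ε)
    (hp : Integrable p μ) (hq : Integrable q μ)
    (hεp : ∀ᵐ x ∂μ, ε ≤ p x) (hεq : ∀ᵐ x ∂μ, ε ≤ q x) :
    hellingerDist μ (normalizedDensity μ p) (normalizedDensity μ q)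
      ≤ hellingerDist μ p q / √ε := by
  have le_integral {r : X → ℝ} (hr : Integrable r μ) (hεr : ∀ᵐ x ∂μ, ε ≤ r x) :
      ε ≤ ∫ x, r x ∂μ := by
    simpa using integral_mono_ae (integrable_const ε) hr hεr
  set d := hellingerDist μ (normalizedDensity μ p) (normalizedDensity μ q)
  rw [le_div_iff₀ (sqrt_pos.2 hε)]
  refine le_of_sq_le_sq ?_ (hellingerDist_nonneg μ p q)
  calc (d * √ε) ^ 2 = √ε * √ε * d ^ 2 := by ring
    _ ≤ √(∫ x, p x ∂μ) * √(∫ x, q x ∂μ) * d ^ 2 := by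
        gcongr
        exacts [le_integral hp hεp, le_integral hq hεq]
    _ ≤ hellingerDist μ p q ^ 2 :=
        mul_sq_hellingerDist_normalizedDensity_le hp hq
          (hεp.mono fun _ => hε.le.trans) (hεq.mono fun _ => hε.le.trans)

end Hellinger

section Gibbs

variable {X : Type*} [MeasurableSpace X] {μ : Measure X}

lemma abs_sqrt_exp_neg_sub_le {a s t : ℝ} (hs : a ≤ s) (ht : a ≤ t) :
    |√(exp (-s)) - √(exp (-t))| ≤ exp (-a / 2) * (|s - t| / 2) := by
  rw [← exp_half, ← exp_half]
  calc |exp (-s / 2) - exp (-t / 2)|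
      ≤ exp (max (-s / 2) (-t / 2)) * |-s / 2 - -t / 2| := abs_exp_sub_exp_le _ _
    _ = exp (max (-s / 2) (-t / 2)) * (|s - t| / 2) := by
        rw [← sub_div, neg_sub_neg, abs_div, abs_sub_comm t, abs_two]
    _ ≤ exp (-a / 2) * (|s - t| / 2) := by
        gcongr
        exact max_le (by linarith) (by linarith)

lemma integrable_exp_neg_of_ae_le [IsFiniteMeasure μ] {Φ : X → ℝ} {a : ℝ} (hΦ : AEMeasurable Φ μ)
    (ha : ∀ᵐ x ∂μ, a ≤ Φ x) : Integrable (fun x => exp (-Φ x)) μ := by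
  refine .of_bound (measurable_exp.comp_aemeasurable hΦ.neg).aestronglyMeasurable (exp (-a)) ?_
  filter_upwards [ha] with x hx
  simpa using hx

theorem hellingerDist_normalizedDensity_exp_neg_le [IsProbabilityMeasure μ] {Φ Φ' : X → ℝ}
    {a b δ : ℝ} (hΦ : AEMeasurable Φ μ) (hΦ' : AEMeasurable Φ' μ)
    (hab : ∀ᵐ x ∂μ, Φ x ∈ Set.Icc a b) (hab' : ∀ᵐ x ∂μ, Φ' x ∈ Set.Icc a b)
    (hδ : ∀ᵐ x ∂μ, |Φ x - Φ' x| ≤ δ) :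
    hellingerDist μ (normalizedDensity μ fun x => exp (-Φ x))
        (normalizedDensity μ fun x => exp (-Φ' x))
      ≤ exp ((b - a) / 2) * δ / (2 * √2) := by
  have unnormalized_le : hellingerDist μ (fun x => exp (-Φ x)) (fun x => exp (-Φ' x))
      ≤ exp (-a / 2) * (δ / 2) / √2 := by
    refine hellingerDist_le_of_abs_sqrt_sub_sqrt_le ?_
    filter_upwards [hab, hab', hδ] with x hx hx' hδx
    refine (abs_sqrt_exp_neg_sub_le hx.1 hx'.1).trans ?_
    gcongr
  calc _ ≤ hellingerDist μ (fun x => exp (-Φ x)) (fun x => exp (-Φ' x)) / √(exp (-b)) :=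
        hellingerDist_normalizedDensity_le_div_sqrt (exp_pos _)
          (integrable_exp_neg_of_ae_le hΦ (hab.mono fun _ => And.left))
          (integrable_exp_neg_of_ae_le hΦ' (hab'.mono fun _ => And.left))
          (hab.mono fun _ hx => exp_le_exp.2 (neg_le_neg hx.2))
          (hab'.mono fun _ hx => exp_le_exp.2 (neg_le_neg hx.2))
    _ ≤ exp (-a / 2) * (δ / 2) / √2 / √(exp (-b)) := by gcongr
    _ = exp (-a / 2) / exp (-b / 2) * δ / (2 * √2) := by
        rw [← exp_half]
        ring
    _ = exp ((b - a) / 2) * δ / (2 * √2) := by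
        rw [← exp_sub]
        ring_nf

end Gibbs

theorem posterior_hellinger_lipschitz_general
    {X E : Type*} [MeasurableSpace X] {μ : Measure X} [IsProbabilityMeasure μ]
    [SeminormedAddCommGroup E] [MeasurableSpace E] [OpensMeasurableSpace E]
    {c σ S : ℝ} (hc : c ≠ 0) (hσ : σ ≠ 0) {F : X → E} (hF : AEMeasurable F μ) {y y' : E}
    (hy : ∀ᵐ x ∂μ, ‖y - F x‖ ≤ S) (hy' : ∀ᵐ x ∂μ, ‖y' - F x‖ ≤ S) :
    hellingerDist μ
        (normalizedDensity μ fun x => c * exp (-‖y - F x‖ ^ 2 / (2 * σ ^ 2)))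
        (normalizedDensity μ fun x => c * exp (-‖y' - F x‖ ^ 2 / (2 * σ ^ 2)))
      ≤ exp (S ^ 2 / (4 * σ ^ 2)) * (S / σ) * (‖y - y'‖ / σ) / (2 * √2) := by
  have misfit_aemeasurable (z : E) :
      AEMeasurable (fun x => ‖z - F x‖ ^ 2 / (2 * σ ^ 2)) μ := by
    have : Continuous fun w : E => ‖z - w‖ ^ 2 / (2 * σ ^ 2) := by fun_prop
    exact this.measurable.comp_aemeasurable hF
  have misfit_mem {z : E} (hz : ∀ᵐ x ∂μ, ‖z - F x‖ ≤ S) :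
      ∀ᵐ x ∂μ, ‖z - F x‖ ^ 2 / (2 * σ ^ 2) ∈ Set.Icc 0 (S ^ 2 / (2 * σ ^ 2)) := by
    filter_upwards [hz] with x hx
    exact ⟨by positivity, by gcongr⟩
  have misfit_lipschitz : ∀ᵐ x ∂μ,
      |‖y - F x‖ ^ 2 / (2 * σ ^ 2) - ‖y' - F x‖ ^ 2 / (2 * σ ^ 2)| ≤ S * ‖y - y'‖ / σ ^ 2 := by
    filter_upwards [hy, hy'] with x hx hx'
    have sq_sub_sq_le := abs_sq_norm_sub_sq_norm_le (y - F x) (y' - F x)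
    rw [sub_sub_sub_cancel_right] at sq_sub_sq_le
    rw [← sub_div, abs_div, abs_of_nonneg (by positivity : 0 ≤ 2 * σ ^ 2)]
    calc |‖y - F x‖ ^ 2 - ‖y' - F x‖ ^ 2| / (2 * σ ^ 2)
        ≤ (S + S) * ‖y - y'‖ / (2 * σ ^ 2) := by
          gcongr
          exact sq_sub_sq_le.trans (by gcongr)
      _ = S * ‖y - y'‖ / σ ^ 2 := by
          field_simp
          ring
  simp only [normalizedDensity_const_mul hc, neg_div]
  refine (hellingerDist_normalizedDensity_exp_neg_le (misfit_aemeasurable y)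
    (misfit_aemeasurable y') (misfit_mem hy) (misfit_mem hy') misfit_lipschitz).trans_eq ?_
  rw [sub_zero, show S ^ 2 / (2 * σ ^ 2) / 2 = S ^ 2 / (4 * σ ^ 2) by ring]
  ring

/-- **Lipschitz stability of the posterior in Hellinger distance.**
With the Gaussian likelihood `Ψ(x; y) = (2πσ²)^(-m/2) exp(-‖y - F x‖²/(2σ²))`,
normalization `Z(y) = ∫ Ψ(x; y) dμ₀(x) > 0`, nonempty `X`, and
`S(y, y') = sup_{x ∈ X} (‖y - F x‖ ∨ ‖y' - F x‖)`, the Hellinger distance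
`d_Hell(μʸ, μʸ') = sqrt((1/2) ∫ (sqrt(Ψ(x;y)/Z(y)) - sqrt(Ψ(x;y')/Z(y')))² dμ₀)`
between the posteriors satisfies
`d_Hell(μʸ, μʸ') ≤ exp(3 S(y,y')²/(4σ²)) · (S(y,y')/σ) · (‖y - y'‖/σ)`. -/
theorem posterior_hellinger_lipschitz
    {X : Type*} [MeasurableSpace X] (hne : Nonempty X)
    (μ₀ : Measure X) (hμ₀ : IsProbabilityMeasure μ₀)
    (m : ℕ) (hm : 0 < m) (σ : ℝ) (hσ : 0 < σ)
    (F : X → EuclideanSpace ℝ (Fin m)) (hF : Measurable F)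
    (C_F : ℝ) (hCF : 0 < C_F) (hFb : ∀ x, ‖F x‖ < C_F)
    (Ψ : X → EuclideanSpace ℝ (Fin m) → ℝ)
    (hΨ : ∀ x y, Ψ x y =
      (2 * π * σ ^ 2) ^ (-(m : ℝ) / 2) * Real.exp (-‖y - F x‖ ^ 2 / (2 * σ ^ 2)))
    (Z : EuclideanSpace ℝ (Fin m) → ℝ)
    (hZ : ∀ y, Z y = ∫ x, Ψ x y ∂μ₀) (hZpos : ∀ y, 0 < Z y) :
    ∀ y y' : EuclideanSpace ℝ (Fin m), ∀ S : ℝ,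
      S = ⨆ x : X, max ‖y - F x‖ ‖y' - F x‖ →
      Real.sqrt ((1 / 2) *
          ∫ x, (Real.sqrt (Ψ x y / Z y) - Real.sqrt (Ψ x y' / Z y')) ^ 2 ∂μ₀)
        ≤ Real.exp (3 * S ^ 2 / (4 * σ ^ 2)) * (S / σ) * (‖y - y'‖ / σ) := by
  intro y y' S hS
  have le_S (x : X) : max ‖y - F x‖ ‖y' - F x‖ ≤ S :=
    hS ▸ le_ciSup (bddAbove_range_max_norm_sub (fun x => (hFb x).le) y y') x
  have S_nonneg : 0 ≤ S := (norm_nonneg _).trans ((le_max_left _ _).trans (le_S hne.some))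
  have hc : (2 * π * σ ^ 2) ^ (-(m : ℝ) / 2) ≠ 0 := by positivity
  simp only [hZ, hΨ]
  refine (posterior_hellinger_lipschitz_general hc hσ.ne' hF.aemeasurable
    (.of_forall fun x => (le_max_left _ _).trans (le_S x))
    (.of_forall fun x => (le_max_right _ _).trans (le_S x))).trans ?_
  have one_le : 1 ≤ 2 * √2 := by linarith [one_le_sqrt.2 one_le_two]
  refine (div_le_self (by positivity) one_le).trans ?_
  gcongr
  linarith [sq_nonneg S]
end
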